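/- There is a universal constant C > 0 with the following property. For all integers N and d with 1 ≤ d ≤ N/2 and dN even, all distinct indices i, j ∈ {1,…,N}, and every real-valued function F on symmetric N×N matrices, the uniform random d-regular graph 𝒜 satisfies | E[𝒜_{ij} F(𝒜)] − (1/((N−d)d)) ∑_{k,l} E[ χ_{ik}^{jl}(𝒜) ( F(𝒜 + ξ_{ij}^{kl}) − F(𝒜) ) ] − (d/(N−d)) E[F(𝒜)] + (1/((N−d)d)) E[ (𝒜³)_{ij} F(𝒜) ] | ≤ C N^{−1} E[ 𝓜_{ij}(F(𝒜)) ], where 𝓜_{ij}(F(𝒜)) := max_{k,l} |F(𝒜 + ξ_{ij}^{kl})| and the sums over k, l run over all pairs in {1,…,N}. -/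

import Mathlib

open MeasureTheory Filter Matrix
open scoped ENNReal NNReal

noncomputable section

/-- `A` is the adjacency matrix of a `d`-regular graph on `N` vertices:
a symmetric `{0,1}`-matrix with zero diagonal and all row sums equal to `d`. -/
def IsAdjMat (N d : ℕ) (A : Matrix (Fin N) (Fin N) ℝ) : Prop :=
  A.IsSymm ∧ (∀ i, A i i = 0) ∧ (∀ i j, A i j = 0 ∨ A i j = 1) ∧ ∀ i, ∑ j, A i j = d

/-- probability of an event under the uniform measure on `d`-regular graphs on `N` vertices. -/
def PrReg (N d : ℕ) (E : Matrix (Fin N) (Fin N) ℝ → Prop) : ℝ :=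
  (Nat.card {A : Matrix (Fin N) (Fin N) ℝ // IsAdjMat N d A ∧ E A} : ℝ) /
    (Nat.card {A : Matrix (Fin N) (Fin N) ℝ // IsAdjMat N d A} : ℝ)

/-- expectation of `F` under the uniform measure on `d`-regular graphs on `N` vertices. -/
def Ereg (N d : ℕ) (F : Matrix (Fin N) (Fin N) ℝ → ℝ) : ℝ :=
  (∑ᶠ A : {A : Matrix (Fin N) (Fin N) ℝ // IsAdjMat N d A}, F A.1) /
    (Nat.card {A : Matrix (Fin N) (Fin N) ℝ // IsAdjMat N d A} : ℝ)

/-- the `k`-th largest eigenvalue (`1`-based indexing) of a symmetric matrix. -/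
def eigval {N : ℕ} (A : Matrix (Fin N) (Fin N) ℝ) (k : ℕ) : ℝ :=
  if hA : A.IsHermitian then
    if h : k - 1 < N then
      hA.eigenvalues (Tuple.sort hA.eigenvalues (Fin.rev ⟨k - 1, h⟩))
    else 0
  else 0

/-- `q = √(d(N-d)/N)`. -/
def qval (N d : ℕ) : ℝ := Real.sqrt ((d : ℝ) * ((N : ℝ) - (d : ℝ)) / (N : ℝ))

/-- the projection `P⊥ = I - e eᵀ` (complex version). -/
def Pperp (N : ℕ) : Matrix (Fin N) (Fin N) ℂ := 1 - Matrix.of fun _ _ => (N : ℂ)⁻¹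

/-- the projection `P⊥ = I - e eᵀ` (real version). -/
def PperpR (N : ℕ) : Matrix (Fin N) (Fin N) ℝ := 1 - Matrix.of fun _ _ => (N : ℝ)⁻¹

/-- the Green function `G(z) = P⊥ (q⁻¹𝒜 - z)⁻¹ P⊥`. -/
def greenM (N d : ℕ) (A : Matrix (Fin N) (Fin N) ℝ) (z : ℂ) : Matrix (Fin N) (Fin N) ℂ :=
  Pperp N * (((qval N d : ℝ) : ℂ)⁻¹ • A.map Complex.ofReal - z • 1)⁻¹ * Pperp N

/-- the normalized trace `Ḡ(z) = N⁻¹ Tr G(z)`. -/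
def gbar (N d : ℕ) (A : Matrix (Fin N) (Fin N) ℝ) (z : ℂ) : ℂ :=
  (N : ℂ)⁻¹ * (greenM N d A z).trace

/-- the Stieltjes transform of the semicircle density `ϱ(x) = (2π)⁻¹ √((4-x²)₊)`. -/
def mSC (z : ℂ) : ℂ :=
  ∫ x in (-2 : ℝ)..2, ((Real.sqrt (4 - x ^ 2) / (2 * Real.pi) : ℝ) : ℂ) / ((x : ℂ) - z)

/-- `(Δ_{ij})_{xy} = δ_{ix}δ_{jy} + δ_{iy}δ_{jx}`. -/
def Dmat (N : ℕ) (i j : Fin N) : Matrix (Fin N) (Fin N) ℝ :=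
  Matrix.of fun x y =>
    (if i = x ∧ j = y then (1 : ℝ) else 0) + (if i = y ∧ j = x then (1 : ℝ) else 0)

/-- `ξ_{ij}^{kl} = Δ_{ij} + Δ_{kl} - Δ_{ik} - Δ_{jl}`. -/
def xiMat (N : ℕ) (i j k l : Fin N) : Matrix (Fin N) (Fin N) ℝ :=
  Dmat N i j + Dmat N k l - Dmat N i k - Dmat N j l

/-- `χ_{ij}^{kl}(𝒜) = 𝒜_{ij}(1-𝒜_{ik})𝒜_{kl}(1-𝒜_{jl})`. -/
def chi (N : ℕ) (A : Matrix (Fin N) (Fin N) ℝ) (i j k l : Fin N) : ℝ :=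
  A i j * (1 - A i k) * A k l * (1 - A j l)

/-- `𝓜_{ij}(F(𝒜)) = max_{k,l} |F(𝒜 + ξ_{ij}^{kl})|`. -/
def Mmax (N : ℕ) (i j : Fin N) (F : Matrix (Fin N) (Fin N) ℝ → ℝ)
    (A : Matrix (Fin N) (Fin N) ℝ) : ℝ :=
  ⨆ p : Fin N × Fin N, |F (A + xiMat N i j p.1 p.2)|

instance matMS (N : ℕ) : MeasurableSpace (Matrix (Fin N) (Fin N) ℝ) :=
  show MeasurableSpace (Fin N → Fin N → ℝ) from inferInstance

/-- the GOE: push-forward of independent centered Gaussians with variance `(1+δ_{ij})/N`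
on the upper triangle under the symmetrization map. -/
def goeMeasure (N : ℕ) : Measure (Matrix (Fin N) (Fin N) ℝ) :=
  Measure.map (fun f => Matrix.of fun i j => if i ≤ j then f (i, j) else f (j, i))
    (Measure.pi fun p : Fin N × Fin N =>
      ProbabilityTheory.gaussianReal 0 (if p.1 = p.2 then 2 / N else 1 / N))

/-- the uniform probability measure on `d`-regular graphs on `N` vertices, as a measure. -/
def uniformReg (N d : ℕ) : Measure (Matrix (Fin N) (Fin N) ℝ) :=
  (Nat.card {A : Matrix (Fin N) (Fin N) ℝ // IsAdjMat N d A} : ℝ≥0∞)⁻¹ •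
    Measure.sum fun A : {A : Matrix (Fin N) (Fin N) ℝ // IsAdjMat N d A} =>
      Measure.dirac A.1

/-- the matrix flow `A(t) = e^{-t/2} q⁻¹𝒜 + √(1-e^{-t}) W`, where `W = P⊥ H P⊥`. -/
def flowMat (N d : ℕ) (A H : Matrix (Fin N) (Fin N) ℝ) (t : ℝ) : Matrix (Fin N) (Fin N) ℝ :=
  Real.exp (-t / 2) • ((qval N d)⁻¹ • A) +
    Real.sqrt (1 - Real.exp (-t)) • (PperpR N * H * PperpR N)

/-- the Green function of the matrix flow, `G(t;z) = P⊥ (A(t) - z)⁻¹ P⊥`. -/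
def greenFlow (N d : ℕ) (A H : Matrix (Fin N) (Fin N) ℝ) (t : ℝ) (z : ℂ) :
    Matrix (Fin N) (Fin N) ℂ :=
  Pperp N * ((flowMat N d A H t).map Complex.ofReal - z • 1)⁻¹ * Pperp N

/-- the normalized trace of the Green function of the flow. -/
def gbarFlow (N d : ℕ) (A H : Matrix (Fin N) (Fin N) ℝ) (t : ℝ) (z : ℂ) : ℂ :=
  (N : ℂ)⁻¹ * (greenFlow N d A H t z).trace

theorem ibp_Dsum {N : ℕ} (i j x : Fin N) :
    ∑ y, Dmat N i j x y = (if i = x then (1:ℝ) else 0) + (if j = x then (1:ℝ) else 0) := by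
  simp only [Dmat, Matrix.of_apply, Finset.sum_add_distrib]
  congr 1
  · by_cases h : i = x <;> simp [h]
  · by_cases h : j = x <;> simp [h]

theorem ibp_switch {N d : ℕ} {i j k l : Fin N} (hij : i ≠ j) (hik : i ≠ k) (hil : i ≠ l)
    (hjk : j ≠ k) (hjl : j ≠ l) (hkl : k ≠ l) {A : Matrix (Fin N) (Fin N) ℝ}
    (hA : IsAdjMat N d A) (h1 : A i k = 1) (h2 : A j l = 1) (h3 : A i j = 0) (h4 : A k l = 0) :
    IsAdjMat N d (A + xiMat N i j k l) ∧ (A + xiMat N i j k l) i j = 1 ∧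
      (A + xiMat N i j k l) k l = 1 ∧ (A + xiMat N i j k l) i k = 0 ∧
      (A + xiMat N i j k l) j l = 0 := by
  obtain ⟨hs, hd, h01, hr⟩ := hA
  have hs' : ∀ x y, A x y = A y x := fun x y => hs.apply y x
  refine ⟨⟨?_, ?_, ?_, ?_⟩, ?_, ?_, ?_, ?_⟩
  · ext x y
    simp only [Matrix.transpose_apply, Matrix.add_apply, xiMat, Matrix.sub_apply, Dmat,
      Matrix.of_apply]
    rw [hs' y x]; ring
  · intro x
    simp only [Matrix.add_apply, xiMat, Matrix.sub_apply, Dmat, Matrix.of_apply, hd]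
    grind
  · intro x y
    have := h01 x y
    have e1 := hs' i k
    have e2 := hs' j l
    have e3 := hs' i j
    have e4 := hs' k l
    simp only [Matrix.add_apply, xiMat, Matrix.sub_apply, Dmat, Matrix.of_apply]
    by_cases a1 : i = x ∧ j = y
    · obtain ⟨rfl, rfl⟩ := a1; right; simp [*, Ne.symm]
    by_cases a2 : i = y ∧ j = x
    · obtain ⟨rfl, rfl⟩ := a2; right; simp [*, Ne.symm]
    by_cases a3 : k = x ∧ l = y
    · obtain ⟨rfl, rfl⟩ := a3; right; simp [*, Ne.symm]
    by_cases a4 : k = y ∧ l = x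
    · obtain ⟨rfl, rfl⟩ := a4; right; simp [*, Ne.symm]
    by_cases a5 : i = x ∧ k = y
    · obtain ⟨rfl, rfl⟩ := a5; left; simp [*, Ne.symm]
    by_cases a6 : i = y ∧ k = x
    · obtain ⟨rfl, rfl⟩ := a6; left; simp [*, Ne.symm]
    by_cases a7 : j = x ∧ l = y
    · obtain ⟨rfl, rfl⟩ := a7; left; simp [*, Ne.symm]
    by_cases a8 : j = y ∧ l = x
    · obtain ⟨rfl, rfl⟩ := a8; left; simp [*, Ne.symm]
    simpa [a1, a2, a3, a4, a5, a6, a7, a8] using this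
  · intro x
    simp only [Matrix.add_apply, xiMat, Matrix.sub_apply, Finset.sum_add_distrib,
      Finset.sum_sub_distrib, ibp_Dsum, hr]
    ring
  all_goals
    simp only [Matrix.add_apply, xiMat, Matrix.sub_apply, Dmat, Matrix.of_apply]
    grind

theorem ibp_xi_neg {N : ℕ} (i j k l : Fin N) : xiMat N i k j l = - xiMat N i j k l := by
  simp only [xiMat]; abel

theorem ibp_finite (N d : ℕ) : {A : Matrix (Fin N) (Fin N) ℝ | IsAdjMat N d A}.Finite := by
  have : (Set.pi Set.univ fun _ : Fin N => Set.pi Set.univ fun _ : Fin N =>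
      ({0, 1} : Set ℝ)).Finite :=
    Set.Finite.pi fun _ => Set.Finite.pi fun _ => by simp
  refine this.subset ?_
  intro A hA x _ y _
  exact hA.2.2.1 x y

def ibpS (N d : ℕ) : Finset (Matrix (Fin N) (Fin N) ℝ) := (ibp_finite N d).toFinset

theorem ibp_mem {N d : ℕ} {A : Matrix (Fin N) (Fin N) ℝ} : A ∈ ibpS N d ↔ IsAdjMat N d A := by
  simp [ibpS]

theorem ibp_Ereg (N d : ℕ) : ∃ c : ℝ, 0 ≤ c ∧ ∀ F, Ereg N d F = c * ∑ A ∈ ibpS N d, F A := by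
  refine ⟨((Nat.card {A : Matrix (Fin N) (Fin N) ℝ // IsAdjMat N d A} : ℝ))⁻¹, by positivity, ?_⟩
  intro F
  have h : ∑ᶠ A : {A : Matrix (Fin N) (Fin N) ℝ // IsAdjMat N d A}, F A.1
      = ∑ A ∈ ibpS N d, F A := by
    rw [finsum_subtype_eq_finsum_cond (f := F) (p := fun A => IsAdjMat N d A),
      ← finsum_mem_finset_eq_sum]
    simp only [ibp_mem]
  unfold Ereg
  rw [h]; ring

theorem ibp_chi {N d : ℕ} {A : Matrix (Fin N) (Fin N) ℝ} (hA : IsAdjMat N d A)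
    (i j k l : Fin N) : chi N A i j k l = 0 ∨
      (chi N A i j k l = 1 ∧ A i j = 1 ∧ A i k = 0 ∧ A k l = 1 ∧ A j l = 0) := by
  obtain ⟨hs, hd, h01, hr⟩ := hA
  unfold chi
  rcases h01 i j with h | h <;> rcases h01 i k with h' | h' <;> rcases h01 k l with h'' | h'' <;>
    rcases h01 j l with h3 | h3 <;> simp [h, h', h'', h3]

theorem ibp_swap {N d : ℕ} {i j k l : Fin N} (hij : i ≠ j) (hik : i ≠ k) (hil : i ≠ l)
    (hjk : j ≠ k) (hjl : j ≠ l) (hkl : k ≠ l) (F : Matrix (Fin N) (Fin N) ℝ → ℝ) :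
    ∑ A ∈ ibpS N d, chi N A i k j l * F (A + xiMat N i j k l)
      = ∑ A ∈ ibpS N d, chi N A i j k l * F A := by
  have ev : ∀ A : Matrix (Fin N) (Fin N) ℝ, A i k = 1 → A j l = 1 → A i j = 0 → A k l = 0 →
    chi N A i k j l = 1 := by
    intro A h1 h2 h3 h4; simp [chi, *]
  have ev' : ∀ A : Matrix (Fin N) (Fin N) ℝ, A i k = 0 → A j l = 0 → A i j = 1 → A k l = 1 →
    chi N A i j k l = 1 := by
    intro A h1 h2 h3 h4; simp [chi, *]
  refine Finset.sum_bij_ne_zero (fun A _ _ => A + xiMat N i j k l) ?_ ?_ ?_ ?_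
  · intro A hA h
    rw [ibp_mem] at *
    rcases ibp_chi hA i k j l with h0 | ⟨_, h1, h2, h3, h4⟩
    · simp [h0] at h
    · exact (ibp_switch hij hik hil hjk hjl hkl hA h1 h3 h2 h4).1
  · intro A _ _ B _ _ h
    simpa using h
  · intro B hB h
    rw [ibp_mem] at hB
    rcases ibp_chi hB i j k l with h0 | ⟨e, h1, h2, h3, h4⟩
    · simp [h0] at h
    · have := ibp_switch hik hij hil hjk.symm hkl hjl hB h1 h3 h2 h4
      have e2 : B + xiMat N i k j l + xiMat N i j k l = B := by rw [ibp_xi_neg]; abel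
      refine ⟨B + xiMat N i k j l, ibp_mem.2 this.1, ?_, e2⟩
      rw [e2, ev _ this.2.1 this.2.2.1 this.2.2.2.1 this.2.2.2.2]
      rwa [e] at h
  · intro A hA h
    rw [ibp_mem] at hA
    rcases ibp_chi hA i k j l with h0 | ⟨e, h1, h2, h3, h4⟩
    · simp [h0] at h
    · obtain ⟨g, g1, g2, g3, g4⟩ := ibp_switch hij hik hil hjk hjl hkl hA h1 h3 h2 h4
      rw [e, ev' _ g3 g4 g1 g2]

theorem ibp_le_M {N : ℕ} (i j : Fin N) (F : Matrix (Fin N) (Fin N) ℝ → ℝ)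
    (A : Matrix (Fin N) (Fin N) ℝ) (k l : Fin N) :
    |F (A + xiMat N i j k l)| ≤ Mmax N i j F A :=
  le_ciSup (f := fun p : Fin N × Fin N => |F (A + xiMat N i j p.1 p.2)|)
    (Set.finite_range _).bddAbove (k, l)

theorem ibp_le_M' {N : ℕ} (i j : Fin N) (F : Matrix (Fin N) (Fin N) ℝ → ℝ)
    (A : Matrix (Fin N) (Fin N) ℝ) :
    |F A| ≤ Mmax N i j F A := by
  have := ibp_le_M i j F A j j
  have h0 : xiMat N i j j j = 0 := by simp [xiMat]
  simpa [h0] using this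

/-- exact sums -/
theorem ibp_sum1 {N d : ℕ} {A : Matrix (Fin N) (Fin N) ℝ} (hA : IsAdjMat N d A) (i j : Fin N) :
    ∑ k, ∑ l, chi N A i k j l = (1 - A i j) * ((d:ℝ) ^ 2 - (A ^ 3) i j) := by
  obtain ⟨hs, hd, h01, hr⟩ := hA
  have hs' : ∀ x y, A x y = A y x := fun x y => hs.apply y x
  have h3 : (A ^ 3) i j = ∑ k, ∑ l, A i k * A k l * A l j := by
    rw [pow_succ, pow_two, Matrix.mul_apply]
    simp only [Matrix.mul_apply, Finset.sum_mul]
    rw [Finset.sum_comm]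
  have e : (d:ℝ)^2 = ∑ k, ∑ l, A i k * A j l := by
    simp only [← Finset.mul_sum, hr, ← Finset.sum_mul]; ring
  rw [h3, e, ← Finset.sum_sub_distrib, Finset.mul_sum]
  refine Finset.sum_congr rfl fun k _ => ?_
  rw [← Finset.sum_sub_distrib, Finset.mul_sum]
  refine Finset.sum_congr rfl fun l _ => ?_
  rw [hs' l j, chi]; ring

theorem ibp_sum2 {N d : ℕ} {A : Matrix (Fin N) (Fin N) ℝ} (hA : IsAdjMat N d A) (i j : Fin N) :
    ∑ k, ∑ l, chi N A i j k l = A i j * ((N:ℝ) * d - 2 * (d:ℝ) ^ 2 + (A ^ 3) i j) := by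
  obtain ⟨hs, hd, h01, hr⟩ := hA
  have hs' : ∀ x y, A x y = A y x := fun x y => hs.apply y x
  have hr' : ∀ y, ∑ x, A x y = d := fun y => by simp only [fun x => hs' x y, hr]
  have h3 : (A ^ 3) i j = ∑ k, ∑ l, A i k * A k l * A l j := by
    rw [pow_succ, pow_two, Matrix.mul_apply]
    simp only [Matrix.mul_apply, Finset.sum_mul]
    rw [Finset.sum_comm]
  have e1 : (N:ℝ) * d = ∑ k, ∑ l, A k l := by simp [hr]
  have e2 : (d:ℝ)^2 = ∑ k, ∑ l, A i k * A k l := by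
    simp only [← Finset.mul_sum, hr, ← Finset.sum_mul]; ring
  have e3 : (d:ℝ)^2 = ∑ k, ∑ l, A k l * A j l := by
    rw [Finset.sum_comm]
    simp only [← Finset.mul_sum, hr, hr', ← Finset.sum_mul]; ring
  have : (N:ℝ) * d - 2 * (d:ℝ) ^ 2 + (A ^ 3) i j = (∑ k, ∑ l, A k l) -
      (∑ k, ∑ l, A i k * A k l) - (∑ k, ∑ l, A k l * A j l)
        + ∑ k, ∑ l, A i k * A k l * A l j := by
    rw [← e1, ← e2, ← e3, ← h3]; ring
  rw [this]
  simp only [← Finset.sum_sub_distrib, ← Finset.sum_add_distrib, Finset.mul_sum]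
  refine Finset.sum_congr rfl fun k _ => Finset.sum_congr rfl fun l _ => ?_
  rw [hs' l j, chi]; ring

/-- all four indices distinct (given that the first two are) -/
def ibpGood {N : ℕ} (i j k l : Fin N) : Prop := i ≠ k ∧ i ≠ l ∧ j ≠ k ∧ j ≠ l ∧ k ≠ l

theorem ibp_bad1 {N d : ℕ} {A : Matrix (Fin N) (Fin N) ℝ} (hA : IsAdjMat N d A) {i j k l : Fin N}
    (h : ¬ ibpGood i j k l) : |chi N A i k j l| ≤ if k = l then A i k else 0 := by
  rcases ibp_chi hA i k j l with h0 | ⟨e, h1, h2, h3, h4⟩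
  · rw [h0, abs_zero]; split_ifs
    · rcases hA.2.2.1 i k with h | h <;> simp [h]
    · rfl
  · have : k = l := by
      by_contra hkl
      apply h
      have hs' : ∀ x y, A x y = A y x := fun x y => hA.1.apply y x
      have := hA.2.1
      refine ⟨?_, ?_, ?_, ?_, hkl⟩ <;> rintro rfl <;> grind
    rw [e, if_pos this, h1, abs_one]

theorem ibp_bad2 {N d : ℕ} {A : Matrix (Fin N) (Fin N) ℝ} (hA : IsAdjMat N d A) {i j k l : Fin N}
    (h : ¬ ibpGood i j k l) : |chi N A i j k l| ≤
      (if k = i then A i l else 0) + (if l = j then A j k else 0) := by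
  have hs' : ∀ x y, A x y = A y x := fun x y => hA.1.apply y x
  have hn : ∀ x y, 0 ≤ A x y := fun x y => by rcases hA.2.2.1 x y with h | h <;> simp [h]
  rcases ibp_chi hA i j k l with h0 | ⟨e, h1, h2, h3, h4⟩
  · rw [h0, abs_zero]
    apply add_nonneg <;> split_ifs <;> simp [hn]
  · have : k = i ∨ l = j := by
      by_contra hkl
      push Not at hkl
      apply h
      have := hA.2.1
      refine ⟨hkl.1.symm, ?_, ?_, hkl.2.symm, ?_⟩ <;> rintro rfl <;> grind
    rw [e, abs_one]
    rcases this with rfl | rfl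
    · rw [if_pos rfl, h3]
      have := hn j k
      split_ifs <;> linarith
    · rw [if_pos rfl, hs' l k, h3]
      have := hn i l
      split_ifs <;> linarith

open Classical in
theorem ibp_key {N d : ℕ} {i j : Fin N} (hij : i ≠ j) (F : Matrix (Fin N) (Fin N) ℝ → ℝ) :
    |∑ A ∈ ibpS N d, ((∑ k, ∑ l, chi N A i j k l * F A) -
      ∑ k, ∑ l, chi N A i k j l * F (A + xiMat N i j k l))| ≤
    3 * d * ∑ A ∈ ibpS N d, Mmax N i j F A := by
  have h1 : ∑ A ∈ ibpS N d, ((∑ k, ∑ l, chi N A i j k l * F A) -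
      ∑ k, ∑ l, chi N A i k j l * F (A + xiMat N i j k l)) =
      ∑ A ∈ ibpS N d, ∑ k, ∑ l, if ibpGood i j k l then 0 else
        (chi N A i j k l * F A - chi N A i k j l * F (A + xiMat N i j k l)) := by
    simp only [← Finset.sum_sub_distrib]
    rw [Finset.sum_comm]
    conv_rhs => rw [Finset.sum_comm]
    refine Finset.sum_congr rfl fun k _ => ?_
    rw [Finset.sum_comm]
    conv_rhs => rw [Finset.sum_comm]
    refine Finset.sum_congr rfl fun l _ => ?_
    split_ifs with hg
    · obtain ⟨g1, g2, g3, g4, g5⟩ := hg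
      rw [Finset.sum_sub_distrib, ibp_swap hij g1 g2 g3 g4 g5]
      simp
    · rfl
  rw [h1, Finset.mul_sum]
  refine (Finset.abs_sum_le_sum_abs _ _).trans (Finset.sum_le_sum fun A hA => ?_)
  rw [ibp_mem] at hA
  have hM : 0 ≤ Mmax N i j F A := (abs_nonneg _).trans (ibp_le_M' i j F A)
  have hn : ∀ x y, 0 ≤ A x y := fun x y => by rcases hA.2.2.1 x y with h | h <;> simp [h]
  have hr := hA.2.2.2
  calc _ ≤ ∑ k, ∑ l, ((if k = i then A i l else 0) + (if l = j then A j k else 0)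
            + (if k = l then A i k else 0)) * Mmax N i j F A := by
        refine (Finset.abs_sum_le_sum_abs _ _).trans (Finset.sum_le_sum fun k _ => ?_)
        refine (Finset.abs_sum_le_sum_abs _ _).trans (Finset.sum_le_sum fun l _ => ?_)
        by_cases hg : ibpGood i j k l
        · rw [if_pos hg, abs_zero]
          refine mul_nonneg (add_nonneg (add_nonneg ?_ ?_) ?_) hM <;> split_ifs <;> simp [hn]
        · rw [if_neg hg]
          refine (abs_sub _ _).trans ?_
          rw [abs_mul, abs_mul, add_mul]
          refine add_le_add ?_ ?_
          · exact mul_le_mul (ibp_bad2 hA hg) (ibp_le_M' i j F A) (abs_nonneg _)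
              ((abs_nonneg _).trans (ibp_bad2 hA hg))
          · exact mul_le_mul (ibp_bad1 hA hg) (ibp_le_M i j F A k l) (abs_nonneg _)
              ((abs_nonneg _).trans (ibp_bad1 hA hg))
    _ = 3 * d * Mmax N i j F A := by
        simp only [← Finset.sum_mul]
        congr 1
        simp only [Finset.sum_add_distrib, Finset.sum_ite_eq', Finset.sum_ite_eq, Finset.mem_univ,
          if_true, hr]
        rw [Finset.sum_comm]
        simp [hr]; ring

/-- Integration by parts formula for the uniform measure on `d`-regular graphs,
with a remainder term insensitive to the degree `d`. -/
theorem integration_by_parts :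
    ∃ C > (0 : ℝ), ∀ N d : ℕ, 1 ≤ d → 2 * d ≤ N → Even (d * N) →
      ∀ i j : Fin N, i ≠ j → ∀ F : Matrix (Fin N) (Fin N) ℝ → ℝ,
      |Ereg N d (fun A => A i j * F A) -
          (1 / (((N : ℝ) - (d : ℝ)) * (d : ℝ))) * ∑ k : Fin N, ∑ l : Fin N,
            Ereg N d (fun A => chi N A i k j l * (F (A + xiMat N i j k l) - F A)) -
          ((d : ℝ) / ((N : ℝ) - (d : ℝ))) * Ereg N d F +
          (1 / (((N : ℝ) - (d : ℝ)) * (d : ℝ))) * Ereg N d (fun A => (A ^ 3) i j * F A)| ≤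
        C * (N : ℝ)⁻¹ * Ereg N d (Mmax N i j F) := by
  refine ⟨6, by norm_num, ?_⟩
  intro N d hd hN _ i j hij F
  obtain ⟨c, hc, hE⟩ := ibp_Ereg N d
  have hd0 : (1:ℝ) ≤ d := by exact_mod_cast hd
  have hN0 : 2 * (d:ℝ) ≤ N := by exact_mod_cast hN
  have hNd : (0:ℝ) < N - d := by linarith
  have hNp : (0:ℝ) < N := by linarith
  have key := ibp_key (d := d) hij F
  have hM : 0 ≤ ∑ A ∈ ibpS N d, Mmax N i j F A :=
    Finset.sum_nonneg fun A _ => (abs_nonneg _).trans (ibp_le_M' i j F A)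
  simp only [hE]
  have id1 : ∑ A ∈ ibpS N d, ((∑ k, ∑ l, chi N A i j k l * F A) -
      ∑ k, ∑ l, chi N A i k j l * F (A + xiMat N i j k l)) =
      ((N:ℝ) - d) * d * ∑ A ∈ ibpS N d, A i j * F A
      - (∑ k : Fin N, ∑ l : Fin N, ∑ A ∈ ibpS N d,
          chi N A i k j l * (F (A + xiMat N i j k l) - F A))
      - (d:ℝ) ^ 2 * ∑ A ∈ ibpS N d, F A + ∑ A ∈ ibpS N d, (A ^ 3) i j * F A := by
    have sw : (∑ k : Fin N, ∑ l : Fin N, ∑ A ∈ ibpS N d,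
          chi N A i k j l * (F (A + xiMat N i j k l) - F A)) =
        ∑ A ∈ ibpS N d, ∑ k : Fin N, ∑ l : Fin N,
          chi N A i k j l * (F (A + xiMat N i j k l) - F A) := by
      rw [Finset.sum_comm' (s := ibpS N d) (t' := Finset.univ) (s' := fun _ => ibpS N d)
        (by simp)]
      exact Finset.sum_congr rfl fun k _ => Finset.sum_comm
    rw [sw, Finset.mul_sum, Finset.mul_sum, ← Finset.sum_sub_distrib, ← Finset.sum_sub_distrib,
      ← Finset.sum_add_distrib]
    refine Finset.sum_congr rfl fun A hA => ?_
    rw [ibp_mem] at hA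
    have s1 := ibp_sum1 hA i j
    have s2 := ibp_sum2 hA i j
    simp only [mul_sub, Finset.sum_sub_distrib, ← Finset.sum_mul, s1, s2]
    ring
  rw [id1] at key
  have e : ∀ a b x y T : ℝ, c * a - 1 / (((N : ℝ) - d) * d) * (c * b)
      - (d:ℝ) / (N - d) * (c * x) + 1 / (((N : ℝ) - d) * d) * (c * y) =
      c / (((N : ℝ) - d) * d) * (((N:ℝ) - d) * d * a - b - (d:ℝ)^2 * x + y) := by
    intro a b x y T
    field_simp
  simp only [← Finset.mul_sum]
  rw [e _ _ _ _ 0, abs_mul, abs_of_nonneg (by positivity)]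
  refine (mul_le_mul_of_nonneg_left key (by positivity)).trans ?_
  have e2 : c / (((N : ℝ) - d) * d) * (3 * d * ∑ A ∈ ibpS N d, Mmax N i j F A) =
      (3 / ((N:ℝ) - d)) * (c * ∑ A ∈ ibpS N d, Mmax N i j F A) := by
    field_simp
  rw [e2]
  refine mul_le_mul_of_nonneg_right ?_ (mul_nonneg hc hM)
  rw [← div_eq_mul_inv, div_le_div_iff₀ hNd hNp]
  linarith

end
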